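/- If φ ∈ R₃ is a smooth cubic form which is not equivalent to X³+Y³+Z³, then its Jacobian net J_φ = span{φ_X, φ_Y, φ_Z} is a 3-dimensional subspace of R₂ and J_φ has smooth discriminant. -/

import Mathlib

/-!
Let `T` be the symmetric trilinear form with `T(x, x, x) = 6 φ(x)`. The quadratic form with
Hessian matrix `T_P := T(P, ·, ·)` is `∑ P_n φ_n`, so the discriminant cubic of the Jacobian net is
the Hessian `P ↦ det T_P` of `φ`, up to the choice of a basis, and smoothness of `φ` says that
`T(x, x, ·) = 0` only for `x = 0`.

Let `P ≠ 0` be a singular point of the Hessian. By Jacobi's formula the matrix `B = adj T_P` is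
orthogonal to every `T_q`, and by Euler's identity `det T_P = 0`. Since `B` is symmetric with
vanishing `2 × 2` minors, each column `v` of `B` satisfies `v vᵀ = B_jj B` (`adj_col`), hence
`T(q, v, v) = 0` for all `q`, and so `v = 0`. Therefore `adj T_P = 0`, and `T_P` has rank one
(`rank_one`).

Rank one and nondegeneracy give `T(P, P, P) ≠ 0` and `T(P, x, ·) = 0` for all `x` in the plane
`W = {x | T(P, P, x) = 0}`. The restriction of `φ` to `W` is a binary cubic without multiple
roots, which is a sum of two cubes (`binary_cubic`). Hence `T` is diagonal in a suitable basis
(`exists_diagonal`), and rescaling by cube roots turns `φ` into the Fermat cubic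
(`formEquiv_of_diagonal`), which is excluded.
-/

open MvPolynomial

noncomputable section

namespace Conics

/-- The action of a `3 × 3` matrix on polynomials in `X, Y, Z` by linear
substitution of the variables. -/
def subst {k : Type} [Field k] (g : Matrix (Fin 3) (Fin 3) k) :
    MvPolynomial (Fin 3) k →ₐ[k] MvPolynomial (Fin 3) k :=
  aeval fun i => ∑ j, C (g i j) * X j

/-- Two forms are equivalent if some invertible linear substitution of the variables
carries one to a nonzero scalar multiple of the other. -/
def FormEquiv {k : Type} [Field k] (F G : MvPolynomial (Fin 3) k) : Prop :=
  ∃ g : Matrix (Fin 3) (Fin 3) k, IsUnit g ∧ ∃ c : k, c ≠ 0 ∧ subst g F = c • G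

/-- The `3 × 3` symmetric matrix of second partial derivatives of a quadratic form. -/
def Mmat {k : Type} [Field k] (q : MvPolynomial (Fin 3) k) : Matrix (Fin 3) (Fin 3) k :=
  Matrix.of fun i j => constantCoeff (pderiv i (pderiv j q))

/-- The discriminant cubic `Γ(a,b,c) = det M(a·v₁ + b·v₂ + c·v₃)` of a triple of
quadratic forms, as a polynomial in the variables `a = X 0`, `b = X 1`, `c = X 2`. -/
def disc {k : Type} [Field k] (v : Fin 3 → MvPolynomial (Fin 3) k) :
    MvPolynomial (Fin 3) k :=
  Matrix.det (Matrix.of fun i j => ∑ m, X m * C (Mmat (v m) i j))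

/-- A polynomial in three variables is smooth (as a projective plane curve) if the only
common zero of its three partial derivatives is the origin. -/
def IsSmooth {k : Type} [Field k] (F : MvPolynomial (Fin 3) k) : Prop :=
  ∀ p : Fin 3 → k, (∀ i, eval p (pderiv i F) = 0) → p = 0

/-- A net of conics has smooth discriminant if the discriminant cubic computed from a
basis is a smooth cubic (a condition independent of the chosen basis). -/
def HasSmoothDiscriminant {k : Type} [Field k]
    (V : Submodule k (MvPolynomial (Fin 3) k)) : Prop :=
  ∀ v : Fin 3 → MvPolynomial (Fin 3) k, LinearIndependent k v →
    Submodule.span k (Set.range v) = V → IsSmooth (disc v)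

/-! ### The trilinear form of a cubic form -/

section Auxiliary

variable {k : Type} [Field k]

/-- The coefficients of the symmetric trilinear form attached to a cubic form `φ`: the constant
terms of its third partial derivatives, which are constants when `φ` is homogeneous of degree
three. -/
def coeffT (φ : MvPolynomial (Fin 3) k) (i j l : Fin 3) : k :=
  constantCoeff (pderiv i (pderiv j (pderiv l φ)))

/-- The trilinear form with coefficients `t`. -/
def tri (t : Fin 3 → Fin 3 → Fin 3 → k) (x y z : Fin 3 → k) : k :=
  ∑ i, ∑ j, ∑ l, t i j l * x i * y j * z l

/-- Partial derivatives commute: the commutator is a derivation killing every variable. -/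
lemma pderiv_comm' (i j : Fin 3) (φ : MvPolynomial (Fin 3) k) :
    pderiv i (pderiv j φ) = pderiv j (pderiv i φ) := by
  have h : ⁅(pderiv i : Derivation k (MvPolynomial (Fin 3) k) (MvPolynomial (Fin 3) k)),
      (pderiv j : Derivation k (MvPolynomial (Fin 3) k) (MvPolynomial (Fin 3) k))⁆ = 0 := by
    apply MvPolynomial.derivation_ext
    intro l
    rw [Derivation.commutator_apply]
    simp [pderiv_X, Pi.single_apply, apply_ite]
  have := congrArg (fun D => D φ) h
  rw [Derivation.commutator_apply] at this
  simpa [sub_eq_zero] using this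

lemma coeffT_swap₁ (φ : MvPolynomial (Fin 3) k) (i j l : Fin 3) :
    coeffT φ i j l = coeffT φ j i l := by
  unfold coeffT; rw [pderiv_comm']

lemma coeffT_swap₂ (φ : MvPolynomial (Fin 3) k) (i j l : Fin 3) :
    coeffT φ i j l = coeffT φ i l j := by
  unfold coeffT; rw [pderiv_comm' j l]

lemma eq_C_of_homog {q : MvPolynomial (Fin 3) k} (h : q.IsHomogeneous 0) :
    q = C (constantCoeff q) := by
  rw [← totalDegree_zero_iff_isHomogeneous, totalDegree_eq_zero_iff_eq_C] at h
  simpa [constantCoeff_eq] using h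

/-- Euler's identity for the second partial derivatives, which are linear forms. -/
lemma pderiv2_eq {φ : MvPolynomial (Fin 3) k} (h : φ.IsHomogeneous 3) (i j : Fin 3) :
    pderiv i (pderiv j φ) = ∑ l, X l * C (coeffT φ l i j) := by
  have h1 : (pderiv i (pderiv j φ)).IsHomogeneous 1 := h.pderiv.pderiv
  rw [← one_smul ℕ (pderiv i (pderiv j φ)), ← h1.sum_X_mul_pderiv]
  refine Finset.sum_congr rfl fun l _ => ?_
  rw [eq_C_of_homog (h1.pderiv (i := l))]; rfl

lemma two_smul_pderiv {φ : MvPolynomial (Fin 3) k} (h : φ.IsHomogeneous 3) (i : Fin 3) :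
    2 • pderiv i φ = ∑ j, ∑ l, X j * (X l * C (coeffT φ l j i)) := by
  have h1 : (pderiv i φ).IsHomogeneous 2 := h.pderiv
  rw [← h1.sum_X_mul_pderiv]
  simp only [pderiv2_eq h, Finset.mul_sum]

lemma six_smul_eq {φ : MvPolynomial (Fin 3) k} (h : φ.IsHomogeneous 3) :
    6 • φ = ∑ i, ∑ j, ∑ l, C (coeffT φ l j i) * X i * X j * X l := by
  have : (6 : ℕ) • φ = 2 • (3 • φ) := by rw [smul_smul]; norm_num
  rw [this, ← h.sum_X_mul_pderiv, Finset.smul_sum]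
  refine Finset.sum_congr rfl fun i _ => ?_
  rw [← mul_smul_comm, two_smul_pderiv h]
  simp only [Finset.mul_sum]
  exact Finset.sum_congr rfl fun j _ => Finset.sum_congr rfl fun l _ => by ring

lemma two_mul_eval_pderiv {φ : MvPolynomial (Fin 3) k} (h : φ.IsHomogeneous 3)
    (p : Fin 3 → k) (i : Fin 3) :
    2 * eval p (pderiv i φ) = tri (coeffT φ) p p (Pi.single i 1) := by
  have := congrArg (eval p) (two_smul_pderiv h i)
  simp only [nsmul_eq_mul, Nat.cast_ofNat, map_ofNat, map_sum, map_mul, eval_X, eval_C] at this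
  rw [this, tri, Finset.sum_comm]
  refine Finset.sum_congr rfl fun j _ => Finset.sum_congr rfl fun l _ => ?_
  rw [Finset.sum_eq_single i]
  · simp; ring
  · intro b _ hb; simp [hb]
  · simp

lemma tri_add₁ (t : Fin 3 → Fin 3 → Fin 3 → k) (x' x y z : Fin 3 → k) :
    tri t (x + x') y z = tri t x y z + tri t x' y z := by
  simp only [tri, ← Finset.sum_add_distrib, Pi.add_apply]
  exact Finset.sum_congr rfl fun i _ => Finset.sum_congr rfl fun j _ =>
    Finset.sum_congr rfl fun l _ => by ring

lemma tri_smul₁ (t : Fin 3 → Fin 3 → Fin 3 → k) (a : k) (x y z : Fin 3 → k) :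
    tri t (a • x) y z = a * tri t x y z := by
  simp only [tri, Finset.mul_sum, Pi.smul_apply, smul_eq_mul]
  exact Finset.sum_congr rfl fun i _ => Finset.sum_congr rfl fun j _ =>
    Finset.sum_congr rfl fun l _ => by ring

lemma tri_add₂ (t : Fin 3 → Fin 3 → Fin 3 → k) (y' x y z : Fin 3 → k) :
    tri t x (y + y') z = tri t x y z + tri t x y' z := by
  simp only [tri, ← Finset.sum_add_distrib, Pi.add_apply]
  exact Finset.sum_congr rfl fun i _ => Finset.sum_congr rfl fun j _ =>
    Finset.sum_congr rfl fun l _ => by ring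

lemma tri_smul₂ (t : Fin 3 → Fin 3 → Fin 3 → k) (a : k) (x y z : Fin 3 → k) :
    tri t x (a • y) z = a * tri t x y z := by
  simp only [tri, Finset.mul_sum, Pi.smul_apply, smul_eq_mul]
  exact Finset.sum_congr rfl fun i _ => Finset.sum_congr rfl fun j _ =>
    Finset.sum_congr rfl fun l _ => by ring

lemma tri_add₃ (t : Fin 3 → Fin 3 → Fin 3 → k) (z' x y z : Fin 3 → k) :
    tri t x y (z + z') = tri t x y z + tri t x y z' := by
  simp only [tri, ← Finset.sum_add_distrib, Pi.add_apply]
  exact Finset.sum_congr rfl fun i _ => Finset.sum_congr rfl fun j _ =>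
    Finset.sum_congr rfl fun l _ => by ring

lemma tri_smul₃ (t : Fin 3 → Fin 3 → Fin 3 → k) (a : k) (x y z : Fin 3 → k) :
    tri t x y (a • z) = a * tri t x y z := by
  simp only [tri, Finset.mul_sum, Pi.smul_apply, smul_eq_mul]
  exact Finset.sum_congr rfl fun i _ => Finset.sum_congr rfl fun j _ =>
    Finset.sum_congr rfl fun l _ => by ring

lemma tri_swap₁ {t : Fin 3 → Fin 3 → Fin 3 → k} (h : ∀ i j l, t i j l = t j i l)
    (x y z : Fin 3 → k) : tri t x y z = tri t y x z := by
  rw [tri, tri, Finset.sum_comm]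
  exact Finset.sum_congr rfl fun i _ => Finset.sum_congr rfl fun j _ =>
    Finset.sum_congr rfl fun l _ => by rw [h]; ring

lemma tri_swap₂ {t : Fin 3 → Fin 3 → Fin 3 → k} (h : ∀ i j l, t i j l = t i l j)
    (x y z : Fin 3 → k) : tri t x y z = tri t x z y := by
  rw [tri, tri]
  refine Finset.sum_congr rfl fun i _ => ?_
  rw [Finset.sum_comm]
  exact Finset.sum_congr rfl fun j _ =>
    Finset.sum_congr rfl fun l _ => by rw [h]; ring

/-! ### The gradient of the discriminant and symmetric `3 × 3` matrices -/

/-- Jacobi's formula for the gradient of the discriminant cubic. -/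
lemma eval_pderiv_disc (v : Fin 3 → MvPolynomial (Fin 3) k) (p : Fin 3 → k) (m : Fin 3) :
    eval p (pderiv m (disc v)) =
      ∑ i, ∑ j, (Matrix.adjugate (Mmat (∑ n, p n • v n))) i j * Mmat (v m) j i := by
  have hM : ∀ i j, Mmat (∑ n, p n • v n) i j = ∑ n, p n * Mmat (v n) i j := by
    intro i j
    simp [Mmat, map_sum, MvPolynomial.smul_eq_C_mul]
  set N : Matrix (Fin 3) (Fin 3) (MvPolynomial (Fin 3) k) :=
    Matrix.of fun i j => ∑ m, X m * C (Mmat (v m) i j) with hN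
  have h1 : ∀ i j, eval p (N i j) = Mmat (∑ n, p n • v n) i j := by
    intro i j; simp [hM, hN]
  have h2 : ∀ i j, eval p (pderiv m (N i j)) = Mmat (v m) i j := by
    intro i j
    simp only [hN, Matrix.of_apply, map_sum, pderiv_mul, pderiv_C, pderiv_X, mul_zero, add_zero]
    simp [Pi.single_apply, apply_ite]
  have h3 : disc v = N.det := rfl
  rw [h3, Matrix.det_fin_three, Matrix.adjugate_fin_three]
  simp only [map_add, map_sub, pderiv_mul, map_mul, h1, h2, Fin.sum_univ_three]
  simp
  ring

/-- If `A` is symmetric and singular, its adjugate `B` is symmetric of rank at most one, so each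
column `v` of `B` satisfies `v vᵀ = B j j • B`. -/
lemma adj_col (A : Matrix (Fin 3) (Fin 3) k) (hA : ∀ i j, A i j = A j i) (hd : A.det = 0)
    (i j l : Fin 3) :
    A.adjugate i j * A.adjugate l j = A.adjugate j j * A.adjugate i l := by
  have h10 := hA 1 0
  have h20 := hA 2 0
  have h21 := hA 2 1
  rw [Matrix.det_fin_three, h10, h20, h21] at hd
  rw [Matrix.adjugate_fin_three, h10, h20, h21]
  fin_cases i <;> fin_cases j <;> fin_cases l <;> simp <;> grind

/-- A matrix with vanishing adjugate has rank at most one, stated as an identity for its bilinear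
form. The two sides differ by `(x × z)ᵀ (adj A)ᵀ (y × w)` with cross products. -/
lemma rank_one (A : Matrix (Fin 3) (Fin 3) k) (h : A.adjugate = 0) (x y z w : Fin 3 → k) :
    (∑ i, ∑ j, A i j * x i * y j) * (∑ i, ∑ j, A i j * z i * w j) =
      (∑ i, ∑ j, A i j * x i * w j) * (∑ i, ∑ j, A i j * z i * y j) := by
  have h' : ∀ i j, A.adjugate i j = 0 := by simp [h]
  rw [Matrix.adjugate_fin_three] at h'
  have h00 := h' 0 0
  have h01 := h' 0 1
  have h02 := h' 0 2
  have h10 := h' 1 0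
  have h11 := h' 1 1
  have h12 := h' 1 2
  have h20 := h' 2 0
  have h21 := h' 2 1
  have h22 := h' 2 2
  simp at h00 h01 h02 h10 h11 h12 h20 h21 h22
  simp only [Fin.sum_univ_three]
  linear_combination (x 1 * z 2 - x 2 * z 1) * (h00 * (y 1 * w 2 - y 2 * w 1) + h10 * (y 2 * w 0 - y 0 * w 2) + h20 * (y 0 * w 1 - y 1 * w 0)) + (x 2 * z 0 - x 0 * z 2) * (h01 * (y 1 * w 2 - y 2 * w 1) + h11 * (y 2 * w 0 - y 0 * w 2) + h21 * (y 0 * w 1 - y 1 * w 0)) + (x 0 * z 1 - x 1 * z 0) * (h02 * (y 1 * w 2 - y 2 * w 1) + h12 * (y 2 * w 0 - y 0 * w 2) + h22 * (y 0 * w 1 - y 1 * w 0))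

/-! ### Diagonalization -/

/-- A binary cubic `a s³ + 3 b s² t + 3 c s t² + d t³` without multiple roots is a
sum of two cubes: some basis `(s, t), (s', t')` kills the mixed polarizations. The hypothesis `h`
says that the two partial derivatives have no common zero. -/
lemma binary_cubic [IsAlgClosed k] (a b c d : k)
    (h : ∀ s t : k, s * s * a + 2 * s * t * b + t * t * c = 0 →
      s * s * b + 2 * s * t * c + t * t * d = 0 → s = 0 ∧ t = 0) :
    ∃ s t s' t' : k,
      (s * (s' * a + t' * b) + t * (s' * b + t' * c) = 0) ∧
      (s * (s' * b + t' * c) + t * (s' * c + t' * d) = 0) ∧ s * t' - t * s' ≠ 0 := by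
  -- a singular member of the pencil of second polars, found by solving the binary Hessian
  have h1 : ∃ s t : k, (s ≠ 0 ∨ t ≠ 0) ∧
      (s * a + t * b) * (s * c + t * d) - (s * b + t * c) * (s * b + t * c) = 0 := by
    by_cases h0 : a * c - b * b = 0
    · exact ⟨1, 0, by simp, by linear_combination h0⟩
    · have hs : ∃ x, (Polynomial.C (a * c - b * b) * Polynomial.X ^ 2 +
          Polynomial.C (a * d - b * c) * Polynomial.X + Polynomial.C (b * d - c * c)).IsRoot x := by
        apply IsAlgClosed.exists_root
        rw [Polynomial.degree_quadratic h0]; decide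
      obtain ⟨x, hx⟩ := hs
      simp [Polynomial.IsRoot] at hx
      exact ⟨x, 1, by simp, by linear_combination hx⟩
  obtain ⟨s, t, hst, hdet⟩ := h1
  have h2 : ∃ v ≠ 0, (!![s * a + t * b, s * b + t * c; s * b + t * c, s * c + t * d] :
      Matrix (Fin 2) (Fin 2) k).mulVec v = 0 := by
    rw [Matrix.exists_mulVec_eq_zero_iff, Matrix.det_fin_two_of]
    exact hdet
  obtain ⟨v, hv0, hv⟩ := h2
  have e0 := congrFun hv 0
  have e1 := congrFun hv 1
  simp [Matrix.mulVec, dotProduct, Fin.sum_univ_two] at e0 e1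
  refine ⟨s, t, v 0, v 1, by linear_combination e0, by linear_combination e1, fun hD => hv0 ?_⟩
  -- if the two vectors were proportional, the cubic would have a double root
  rcases hst with hs | ht
  · have hh := h (v 0) (v 1) ?_ ?_
    · ext i; fin_cases i <;> simp [hh]
    · apply mul_left_cancel₀ hs; linear_combination v 0 * e0 + (v 0 * b + v 1 * c) * hD
    · apply mul_left_cancel₀ hs; linear_combination v 0 * e1 + (v 0 * c + v 1 * d) * hD
  · have hh := h (v 0) (v 1) ?_ ?_
    · ext i; fin_cases i <;> simp [hh]
    · apply mul_left_cancel₀ ht; linear_combination v 1 * e0 - (v 0 * a + v 1 * b) * hD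
    · apply mul_left_cancel₀ ht; linear_combination v 1 * e1 - (v 0 * b + v 1 * c) * hD

/-- If a nondegenerate symmetric trilinear form has a polar `tri t P` of rank one, then it is
diagonal in a suitable basis. -/
lemma exists_diagonal [IsAlgClosed k] {t : Fin 3 → Fin 3 → Fin 3 → k}
    (h₁ : ∀ x y z, tri t x y z = tri t y x z) (h₂ : ∀ x y z, tri t x y z = tri t x z y)
    (hnd : ∀ x, (∀ z, tri t x x z = 0) → x = 0) (P : Fin 3 → k) (hP : P ≠ 0)
    (hrk : ∀ x y z w, tri t P x y * tri t P z w = tri t P x w * tri t P z y) :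
    ∃ (g : Fin 3 → Fin 3 → k) (d : Fin 3 → k), (∀ l, d l ≠ 0) ∧
      ∀ l m n, tri t (g l) (g m) (g n) = if l = m ∧ m = n then d l else 0 := by
  obtain ⟨z, hz⟩ : ∃ z, tri t P P z ≠ 0 := by
    by_contra! hcon
    exact hP (hnd P hcon)
  have hker : ∀ x, tri t P P x = 0 → ∀ y, tri t P x y = 0 := by
    intro x hx y
    have := hrk x y z P
    rw [h₂ P x P, hx, zero_mul, h₂ P z P] at this
    exact (mul_eq_zero.1 this).resolve_right hz
  have hPPP : tri t P P P ≠ 0 := fun h0 => hz (hker P h0 z)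
  let ℓ : (Fin 3 → k) →ₗ[k] k :=
    { toFun := fun x => tri t P P x
      map_add' := fun x y => tri_add₃ t _ _ _ _
      map_smul' := fun a x => tri_smul₃ t _ _ _ _ }
  have hℓ : ∀ x, ℓ x = tri t P P x := fun _ => rfl
  have hfr : Module.finrank k (LinearMap.ker ℓ) = 2 := by
    have hsurj : LinearMap.range ℓ = ⊤ := by
      refine LinearMap.range_eq_top.2 (LinearMap.surjective ?_)
      intro h0
      exact hPPP (by rw [← hℓ, h0]; rfl)
    have := ℓ.finrank_range_add_finrank_ker
    rw [hsurj, finrank_top] at this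
    simp at this
    omega
  let b := Module.finBasisOfFinrankEq k (LinearMap.ker ℓ) hfr
  -- `e, f` is a basis of the plane `T(P, P, ·) = 0`, and `P, e, f` spans the whole space
  obtain ⟨e, he⟩ : ∃ e, e = (b 0 : Fin 3 → k) := ⟨_, rfl⟩
  obtain ⟨f, hf⟩ : ∃ f, f = (b 1 : Fin 3 → k) := ⟨_, rfl⟩
  have hPe : tri t P P e = 0 := by rw [he]; exact (b 0).2
  have hPf : tri t P P f = 0 := by rw [hf]; exact (b 1).2
  have hind : ∀ s r : k, s • e + r • f = 0 → s = 0 ∧ r = 0 := by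
    intro s r h0
    have hb := Fintype.linearIndependent_iff.1 b.linearIndependent ![s, r] (by
      apply Subtype.ext
      simpa [Fin.sum_univ_two, ← he, ← hf] using h0)
    exact ⟨hb 0, hb 1⟩
  have hspan : ∀ x, ∃ α s r : k, x = α • P + (s • e + r • f) := by
    intro x
    have hx : x - (tri t P P x / tri t P P P) • P ∈ LinearMap.ker ℓ := by
      rw [LinearMap.mem_ker, map_sub, map_smul, hℓ, hℓ, smul_eq_mul]
      field_simp
      simp
    have := congrArg Subtype.val (b.sum_repr ⟨_, hx⟩)
    simp only [Fin.sum_univ_two] at this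
    refine ⟨tri t P P x / tri t P P P, b.repr ⟨_, hx⟩ 0, b.repr ⟨_, hx⟩ 1,
      sub_eq_iff_eq_add'.1 ?_⟩
    rw [he, hf]; exact this.symm
  have hPe' := hker e hPe
  have hPf' := hker f hPf
  -- nondegeneracy may be tested on `e` and `f` for vectors in their span
  have hnd' : ∀ s r : k, tri t (s • e + r • f) (s • e + r • f) e = 0 →
      tri t (s • e + r • f) (s • e + r • f) f = 0 → s = 0 ∧ r = 0 := by
    intro s r h1 h2
    refine hind s r (hnd _ fun y => ?_)
    obtain ⟨α, s', r', rfl⟩ := hspan y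
    have h3 : tri t (s • e + r • f) (s • e + r • f) P = 0 := by
      rw [h₂, h₁]
      simp [tri_add₂, tri_smul₂, hPe', hPf']
    rw [tri_add₃, tri_add₃, tri_smul₃, tri_smul₃, tri_smul₃, h1, h2, h3]
    simp
  have s1 : tri t e f e = tri t e e f := h₂ _ _ _
  have s2 : tri t f e e = tri t e e f := (h₁ _ _ _).trans s1
  have s3 : tri t f e f = tri t e f f := h₁ _ _ _
  have s4 : tri t f f e = tri t e f f := (h₂ _ _ _).trans s3
  obtain ⟨s, r, s', r', hue, huf, hD⟩ :=
    binary_cubic (tri t e e e) (tri t e e f) (tri t e f f) (tri t f f f) (by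
      intro s r h1 h2
      apply hnd' s r
      · simp only [tri_add₁, tri_smul₁, tri_add₂, tri_smul₂, s1, s2, s4]
        linear_combination h1
      · simp only [tri_add₁, tri_smul₁, tri_add₂, tri_smul₂, s3]
        linear_combination h2)
  obtain ⟨u, hu⟩ : ∃ u, u = s • e + r • f := ⟨_, rfl⟩
  obtain ⟨w, hw⟩ : ∃ w, w = s' • e + r' • f := ⟨_, rfl⟩
  have hPu : ∀ y, tri t P u y = 0 := by
    intro y; simp [hu, tri_add₂, tri_smul₂, hPe', hPf']
  have hPw : ∀ y, tri t P w y = 0 := by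
    intro y; simp [hw, tri_add₂, tri_smul₂, hPe', hPf']
  have huwe : tri t u w e = 0 := by
    simp only [hu, hw, tri_add₁, tri_smul₁, tri_add₂, tri_smul₂, s1, s2, s4]
    linear_combination hue
  have huwf : tri t u w f = 0 := by
    simp only [hu, hw, tri_add₁, tri_smul₁, tri_add₂, tri_smul₂, s3]
    linear_combination huf
  have huwu : tri t u w u = 0 := by
    conv_lhs => rw [hu, tri_add₃, tri_smul₃, tri_smul₃, ← hu, huwe, huwf]
    simp
  have huww : tri t u w w = 0 := by
    conv_lhs => arg 4; rw [hw]
    rw [tri_add₃, tri_smul₃, tri_smul₃, huwe, huwf]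
    simp
  have hef : ∀ x, tri t x x u = 0 → tri t x x w = 0 → tri t x x e = 0 ∧ tri t x x f = 0 := by
    intro x h1 h2
    rw [hu, tri_add₃, tri_smul₃, tri_smul₃] at h1
    rw [hw, tri_add₃, tri_smul₃, tri_smul₃] at h2
    constructor <;> apply mul_left_cancel₀ hD
    · linear_combination r' * h1 - r * h2
    · linear_combination s * h2 - s' * h1
  have huuu : tri t u u u ≠ 0 := by
    intro h0
    obtain ⟨h1, h2⟩ := hef u h0 (by rw [h₂, huwu])
    rw [hu] at h1 h2
    obtain ⟨rfl, rfl⟩ := hnd' s r h1 h2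
    simp at hD
  have hwww : tri t w w w ≠ 0 := by
    intro h0
    obtain ⟨h1, h2⟩ := hef w (by rw [h₂, h₁, huww]) h0
    rw [hw] at h1 h2
    obtain ⟨rfl, rfl⟩ := hnd' s' r' h1 h2
    simp at hD
  have p1 : ∀ y, tri t u P y = 0 := fun y => by rw [h₁, hPu]
  have p2 : ∀ y, tri t w P y = 0 := fun y => by rw [h₁, hPw]
  have p3 : ∀ y, tri t u y P = 0 := fun y => by rw [h₂, p1]
  have p4 : ∀ y, tri t w y P = 0 := fun y => by rw [h₂, p2]
  have p5 : tri t P P u = 0 := by rw [h₂, hPu]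
  have p6 : tri t P P w = 0 := by rw [h₂, hPw]
  have p7 : tri t u u w = 0 := by rw [h₂, huwu]
  have p8 : tri t w u u = 0 := by rw [h₁, huwu]
  have p9 : tri t w u w = 0 := by rw [h₁, huww]
  have p10 : tri t w w u = 0 := by rw [h₂, p9]
  refine ⟨![P, u, w], ![tri t P P P, tri t u u u, tri t w w w], ?_, ?_⟩
  · intro l
    fin_cases l
    exacts [hPPP, huuu, hwww]
  · intro l m n
    fin_cases l <;> fin_cases m <;> fin_cases n <;>
      simp [hPu, hPw, p1, p2, p3, p4, p5, p6, p7, p8, p9, p10, huwu, huww]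

/-- A cubic form whose trilinear form is diagonal in some basis is a sum of three cubes. -/
lemma formEquiv_of_diagonal [IsAlgClosed k] [CharZero k] {φ : MvPolynomial (Fin 3) k}
    (hφ : φ.IsHomogeneous 3) (g : Fin 3 → Fin 3 → k) (d : Fin 3 → k) (hd : ∀ l, d l ≠ 0)
    (hg : ∀ l m n, tri (coeffT φ) (g l) (g m) (g n) = if l = m ∧ m = n then d l else 0) :
    FormEquiv φ (X 0 ^ 3 + X 1 ^ 3 + X 2 ^ 3) := by
  have hc : ∀ l, ∃ c : k, c ^ 3 = 6 / d l := fun l => IsAlgClosed.exists_pow_nat_eq _ (by norm_num)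
  choose c hc using hc
  -- scaling the `l`-th basis vector by `c l` makes the cubic equal to `1` there
  have hc0 : ∀ l, c l ≠ 0 := by
    intro l h0
    have := hc l
    rw [h0] at this
    have h6 : (6 : k) / d l ≠ 0 := div_ne_zero (by norm_num) (hd l)
    exact h6 (by rw [← this]; norm_num)
  have htri : ∀ p : Fin 3 → k, ∀ y, y = p 0 • g 0 + p 1 • g 1 + p 2 • g 2 →
      ∀ m, tri (coeffT φ) y (g m) (g m) = p m * d m := by
    rintro p _ rfl m
    simp only [tri_add₁, tri_smul₁, hg]
    fin_cases m <;> simp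
  refine ⟨Matrix.of fun i j => c j * g j i, ?_, 1, one_ne_zero, ?_⟩
  · rw [Matrix.isUnit_iff_isUnit_det, isUnit_iff_ne_zero]
    intro hdet
    -- pairing a relation between the columns with `(g m, g m)` isolates its `m`-th coefficient
    obtain ⟨v, hv0, hv⟩ := Matrix.exists_mulVec_eq_zero_iff.2 hdet
    apply hv0
    ext m
    have h1 := htri (fun l => v l * c l) 0 (by
      rw [← hv]
      ext i
      simp [Matrix.mulVec, dotProduct, Fin.sum_univ_three]
      ring) m
    have h2 : tri (coeffT φ) 0 (g m) (g m) = 0 := by simp [tri]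
    rw [h2] at h1
    simpa [hc0, hd] using h1.symm
  -- the field is infinite, so the two cubic forms may be compared as functions
  · apply MvPolynomial.funext
    intro p
    have h6 : (6 : k) ≠ 0 := by norm_num
    apply mul_left_cancel₀ h6
    have h1 : eval p (subst (Matrix.of fun i j => c j * g j i) φ) =
        eval (fun i => ∑ j, c j * g j i * p j) φ := by
      rw [subst, ← coe_aeval_eq_eval, ← coe_aeval_eq_eval]
      simp only [RingHom.coe_coe]
      rw [← AlgHom.comp_apply, comp_aeval]
      simp
    have h2 : ∀ y : Fin 3 → k, 6 * eval y φ = tri (coeffT φ) y y y := by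
      intro y
      have := congrArg (eval y) (six_smul_eq hφ)
      simp only [nsmul_eq_mul, Nat.cast_ofNat, map_ofNat, map_sum, map_mul, eval_X,
        eval_C] at this
      rw [this, tri]
      simp only [Fin.sum_univ_three]
      ring
    have h3 : (fun i => ∑ j, c j * g j i * p j) =
        (p 0 * c 0) • g 0 + (p 1 * c 1) • g 1 + (p 2 * c 2) • g 2 := by
      ext i
      simp [Fin.sum_univ_three]
      ring
    have h4 : ∀ l, d l * c l ^ 3 = 6 := by
      intro l; rw [hc, mul_div_cancel₀ _ (hd l)]
    rw [h1, h2, h3]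
    simp only [tri_add₁, tri_smul₁, tri_add₂, tri_smul₂, tri_add₃, tri_smul₃, hg]
    simp
    linear_combination p 0 ^ 3 * h4 0 + p 1 ^ 3 * h4 1 + p 2 ^ 3 * h4 2

/-! ### Singular points of the Hessian -/

lemma Mmat_comb (φ : MvPolynomial (Fin 3) k) (P : Fin 3 → k) (i j : Fin 3) :
    Mmat (∑ n, P n • pderiv n φ) i j = ∑ n, P n * coeffT φ i j n := by
  simp [Mmat, coeffT, map_sum, MvPolynomial.smul_eq_C_mul]

/-- The trilinear form `T` of a smooth cubic form is nondegenerate in the sense that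
`T(x, x, ·) = 0` forces `x = 0`. -/
lemma tri_nondeg [CharZero k] {φ : MvPolynomial (Fin 3) k} (hφ : φ.IsHomogeneous 3)
    (hsm : IsSmooth φ) (x : Fin 3 → k) (h : ∀ z, tri (coeffT φ) x x z = 0) : x = 0 := by
  refine hsm x fun i => ?_
  have := two_mul_eval_pderiv hφ x i
  rw [h] at this
  simpa using this

/-- If `P` is a singular point of the Hessian of a smooth cubic form, in the sense that the
adjugate of `A = T(P, ·, ·)` is orthogonal to all `T(q, ·, ·)`, then `A` has rank one and the form
is equivalent to the Fermat cubic. -/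
lemma fermat_of_singular [IsAlgClosed k] [CharZero k] {φ : MvPolynomial (Fin 3) k}
    (hφ : φ.IsHomogeneous 3) (hsm : IsSmooth φ) (P : Fin 3 → k) (hP : P ≠ 0)
    (A : Matrix (Fin 3) (Fin 3) k) (hA : ∀ i j, A i j = ∑ n, P n * coeffT φ i j n)
    (hsing : ∀ n, ∑ i, ∑ j, A.adjugate i j * coeffT φ j i n = 0) :
    FormEquiv φ (X 0 ^ 3 + X 1 ^ 3 + X 2 ^ 3) := by
  have hAs : ∀ i j, A i j = A j i := by
    intro i j
    simp only [hA, coeffT_swap₁ φ i j]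
  have h₁ := tri_swap₁ (coeffT_swap₁ φ)
  have h₂ := tri_swap₂ (coeffT_swap₂ φ)
  have hAtri : ∀ x y, tri (coeffT φ) P x y = ∑ i, ∑ j, A i j * x i * y j := by
    intro x y
    rw [h₁, h₂, tri]
    refine Finset.sum_congr rfl fun i _ => Finset.sum_congr rfl fun j _ => ?_
    rw [hA, Finset.sum_mul, Finset.sum_mul]
    exact Finset.sum_congr rfl fun n _ => by ring
  -- Euler's identity: a singular point lies on the discriminant curve
  have hdet : A.det = 0 := by
    have h3 : ∑ n, P n * ∑ i, ∑ j, A.adjugate i j * coeffT φ j i n = 3 * A.det := by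
      have : ∑ n, P n * ∑ i, ∑ j, A.adjugate i j * coeffT φ j i n
          = ∑ i, (A.adjugate * A) i i := by
        simp only [Matrix.mul_apply, hA, Fin.sum_univ_three]
        ring
      rw [this, Matrix.adjugate_mul]
      simp
    simp only [hsing, mul_zero, Finset.sum_const_zero] at h3
    have h30 : (3 : k) ≠ 0 := by norm_num
    exact (mul_eq_zero.1 h3.symm).resolve_left h30
  -- every column `v` of the adjugate satisfies `tri t v v = 0`
  have hadj : A.adjugate = 0 := by
    have hcol : ∀ j, (fun i => A.adjugate i j) = 0 := by
      intro j
      apply tri_nondeg hφ hsm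
      intro z
      have : tri (coeffT φ) (fun i => A.adjugate i j) (fun i => A.adjugate i j) z =
          A.adjugate j j * ∑ n, z n * ∑ i, ∑ l, A.adjugate i l * coeffT φ l i n := by
        rw [tri]
        have e : ∀ i l n, coeffT φ i l n * A.adjugate i j * A.adjugate l j * z n =
            A.adjugate j j * (z n * (A.adjugate i l * coeffT φ l i n)) := by
          intro i l n
          rw [coeffT_swap₁ φ i l]
          linear_combination coeffT φ l i n * z n * adj_col A hAs hdet i j l
        simp only [e, ← Finset.mul_sum]
        congr 1
        simp only [Finset.mul_sum]
        rw [Finset.sum_congr rfl fun i _ => Finset.sum_comm, Finset.sum_comm]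
      rw [this]
      simp [hsing]
    ext i j
    exact congrFun (hcol j) i
  obtain ⟨g, d, hd, hg⟩ := exists_diagonal h₁ h₂ (tri_nondeg hφ hsm) P hP (by
    intro x y z w
    simp only [hAtri]
    exact rank_one A hadj x y z w)
  exact formEquiv_of_diagonal hφ g d hd hg

lemma linearIndependent_pderiv [CharZero k] {φ : MvPolynomial (Fin 3) k}
    (hφ : φ.IsHomogeneous 3) (hsm : IsSmooth φ) :
    LinearIndependent k (fun n => pderiv n φ) := by
  rw [Fintype.linearIndependent_iff]
  intro c hc
  have hM : ∀ i j, ∑ n, c n * coeffT φ i j n = 0 := by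
    intro i j
    rw [← Mmat_comb, hc]
    simp [Mmat]
  have : c = 0 := by
    apply tri_nondeg hφ hsm
    intro z
    rw [tri_swap₂ (coeffT_swap₂ φ), tri]
    have e : ∀ i j n, coeffT φ i j n * c i * z j * c n =
        c i * z j * (c n * coeffT φ i j n) := by intros; ring
    simp only [e, ← Finset.mul_sum, hM]
    simp
  intro i
  rw [this]; rfl

end Auxiliary

/-- If `φ` is a smooth cubic form not equivalent to the Fermat cubic, then its Jacobian
net `J_φ = span{φ_X, φ_Y, φ_Z}` is a `3`-dimensional subspace of `R₂` and has smooth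
discriminant. -/
theorem jacobian_net_smooth_discriminant (k : Type) [Field k] [IsAlgClosed k] [CharZero k]
    (φ : MvPolynomial (Fin 3) k) (hφ3 : φ ∈ homogeneousSubmodule (Fin 3) k 3)
    (hsm : IsSmooth φ) (hferm : ¬ FormEquiv φ (X 0 ^ 3 + X 1 ^ 3 + X 2 ^ 3)) :
    Submodule.span k {pderiv 0 φ, pderiv 1 φ, pderiv 2 φ} ≤
        homogeneousSubmodule (Fin 3) k 2 ∧
      Module.finrank k (Submodule.span k {pderiv 0 φ, pderiv 1 φ, pderiv 2 φ}) = 3 ∧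
      HasSmoothDiscriminant (Submodule.span k {pderiv 0 φ, pderiv 1 φ, pderiv 2 φ}) := by
  have hφ : φ.IsHomogeneous 3 := hφ3
  have hset : ({pderiv 0 φ, pderiv 1 φ, pderiv 2 φ} : Set (MvPolynomial (Fin 3) k)) =
      Set.range (fun n : Fin 3 => pderiv n φ) := by
    ext q
    simp [Fin.exists_fin_succ, eq_comm]
  have hli := linearIndependent_pderiv hφ hsm
  rw [hset]
  refine ⟨?_, ?_, ?_⟩
  · rw [Submodule.span_le]
    rintro _ ⟨n, rfl⟩
    exact hφ.pderiv
  · rw [finrank_span_eq_card hli]; rfl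
  · intro v hv hspan p hp
    by_contra hp0
    have hmem : ∑ n, p n • v n ∈ Submodule.span k (Set.range fun n : Fin 3 => pderiv n φ) := by
      rw [← hspan]
      exact Submodule.sum_mem _ fun n _ =>
        Submodule.smul_mem _ _ (Submodule.subset_span ⟨n, rfl⟩)
    obtain ⟨P, hP⟩ := (Submodule.mem_span_range_iff_exists_fun k).1 hmem
    have hP0 : P ≠ 0 := by
      rintro rfl
      apply hp0
      ext i
      exact Fintype.linearIndependent_iff.1 hv p (by rw [← hP]; simp) i
    refine hferm (fermat_of_singular hφ hsm P hP0 (Mmat (∑ n, p n • v n)) ?_ ?_)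
    · intro i j
      rw [← hP, Mmat_comb]
    · intro n
      have hn : pderiv n φ ∈ Submodule.span k (Set.range v) := by
        rw [hspan]
        exact Submodule.subset_span ⟨n, rfl⟩
      obtain ⟨c, hc⟩ := (Submodule.mem_span_range_iff_exists_fun k).1 hn
      have hcoef : ∀ i j, coeffT φ j i n = ∑ m, c m * Mmat (v m) j i := by
        intro i j
        have : coeffT φ j i n = Mmat (pderiv n φ) j i := rfl
        rw [this, ← hc]
        simp [Mmat, map_sum, MvPolynomial.smul_eq_C_mul]
      -- the directional derivative of the discriminant along `c`
      have hsum : ∑ m, c m * eval p (pderiv m (disc v)) = 0 := by simp [hp]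
      rw [← hsum]
      simp only [eval_pderiv_disc, hcoef, Fin.sum_univ_three]
      ring

end Conics
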